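/- Let n ≥ 4 and 3 ≤ m ≤ n−1. Let G be obtained from K_n by deleting the edges of a tadpole T_{m,1}: a cycle on m vertices together with one pendant edge attached to the cycle, all within K_n. Then G admits a path decomposition into at most ⌊(n+1)/2⌋ paths. -/

import Mathlib

open SimpleGraph

/-- A path decomposition of `G`: a list of paths such that every edge of `G`
lies in exactly one of them. -/
def IsPathDecomp {V : Type*} (G : SimpleGraph V)
    (P : List (Σ u v : V, G.Walk u v)) : Prop :=
  (∀ p ∈ P, p.2.2.IsPath) ∧
  P.Pairwise (fun p q => ∀ e, e ∈ p.2.2.edges → e ∉ q.2.2.edges) ∧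
  ∀ e, e ∈ G.edgeSet ↔ ∃ p ∈ P, e ∈ p.2.2.edges

/-!
Modulo `2k`, the zigzags `c, c + 1, c - 1, c + 2, …, c + k` with `0 ≤ c < k` are Walecki's
decomposition of `K_{2k}` into `k` Hamiltonian paths; closing each of them up through a further
vertex `∞` decomposes `K_{2k+1}` into `k` Hamiltonian cycles. By symmetry of the complete graph it
suffices to remove one tadpole of each size.

Even order: the cycle runs along the beginning of the zigzag `c = 0`, ending in a vertex `t`, and is
closed by an edge at `t` of another zigzag. Cut both paths at `t`. The part of the second path
before `t` stays inside the part of the first path before `t`, so gluing it to what remains of the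
first path after `t` gives a path again, and the number of paths does not grow. Which edge closes
the cycle depends on `m` modulo `4`; for `m ≡ 2` the exchange involves a third path.

Odd order: the cycle again runs along the zigzag `c = 0`, with `∞` as the pendant vertex, and is
closed by an edge of another Hamiltonian cycle. From every remaining Hamiltonian cycle remove one
edge, in such a way that the removed edges form one additional path.
-/

section VertexLists

variable {V W : Type*}

/-- The multiset of edges traversed by a walk with vertex sequence `l`. -/
def pathEdges (l : List V) : Multiset (Sym2 V) :=
  (List.zipWith (s(·, ·)) l l.tail : List (Sym2 V))

@[simp]
theorem pathEdges_singleton (a : V) : pathEdges [a] = 0 := rfl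

@[simp]
theorem pathEdges_cons_cons (a b : V) (l : List V) :
    pathEdges (a :: b :: l) = s(a, b) ::ₘ pathEdges (b :: l) := rfl

theorem pathEdges_append_cons (l l' : List V) (a : V) :
    pathEdges (l ++ a :: l') = pathEdges (l ++ [a]) + pathEdges (a :: l') := by
  induction l with
  | nil => simp
  | cons b l ih => cases l <;> simp_all

theorem pathEdges_reverse (l : List V) : pathEdges l.reverse = pathEdges l := by
  induction l with
  | nil => rfl
  | cons a l ih =>
    cases l with
    | nil => rfl
    | cons b l =>
      rw [pathEdges_cons_cons, ← ih, List.reverse_cons, List.reverse_cons, List.append_assoc,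
        List.singleton_append, pathEdges_append_cons, pathEdges_cons_cons, pathEdges_singleton,
        Sym2.eq_swap, add_comm, Multiset.cons_add, zero_add]

theorem pathEdges_map (φ : V → W) (l : List V) :
    pathEdges (l.map φ) = (pathEdges l).map (Sym2.map φ) := by
  simp only [pathEdges, ← List.map_tail, Multiset.map_coe, List.map_zipWith, List.zipWith_map,
    Sym2.map_mk]

theorem pathEdges_map_range_succ (g : ℕ → V) (n : ℕ) :
    pathEdges ((List.range (n + 1)).map g) =
      (Multiset.range n).map fun i => s(g i, g (i + 1)) := by
  induction n with
  | zero => rfl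
  | succ n ih =>
    rw [List.range_succ, List.map_append, List.range_succ, List.map_append, List.append_assoc,
      List.map_singleton, List.map_singleton, List.singleton_append, pathEdges_append_cons,
      ← List.map_singleton, ← List.map_append, ← List.range_succ, ih, Multiset.range_succ,
      Multiset.map_cons, pathEdges_cons_cons, pathEdges_singleton, add_comm, Multiset.cons_add,
      zero_add]

theorem card_pathEdges (l : List V) : (pathEdges l).card = l.length - 1 := by
  simp [pathEdges]

theorem mem_pathEdges_iff {l : List V} {e : Sym2 V} :
    e ∈ pathEdges l ↔ ∃ l₁ x y l₂, l = l₁ ++ x :: y :: l₂ ∧ e = s(x, y) := by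
  constructor
  · intro he
    induction l with
    | nil => simp [pathEdges] at he
    | cons a l ih =>
      cases l with
      | nil => simp at he
      | cons b l =>
        rcases Multiset.mem_cons.1 (pathEdges_cons_cons a b l ▸ he) with rfl | he
        · exact ⟨[], a, b, l, rfl, rfl⟩
        · obtain ⟨l₁, x, y, l₂, hl, rfl⟩ := ih he
          exact ⟨a :: l₁, x, y, l₂, by rw [hl, List.cons_append], rfl⟩
  · rintro ⟨l₁, x, y, l₂, rfl, rfl⟩
    rw [pathEdges_append_cons, pathEdges_cons_cons]
    exact Multiset.mem_add.2 (.inr (Multiset.mem_cons_self _ _))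

/-- The edges of the closed walk that visits `a`, then the vertices of `l`, then `a` again. -/
def cycleEdges (a : V) (l : List V) : Multiset (Sym2 V) :=
  pathEdges (a :: l ++ [a])

/-- The edges of the tadpole with cycle `a :: l` and pendant vertex `x` attached at `a`. -/
def tadpoleEdges (x a : V) (l : List V) : Multiset (Sym2 V) :=
  s(x, a) ::ₘ cycleEdges a l

theorem tadpoleEdges_map (φ : V → W) (x a : V) (l : List V) :
    tadpoleEdges (φ x) (φ a) (l.map φ) = (tadpoleEdges x a l).map (Sym2.map φ) := by
  simp [tadpoleEdges, cycleEdges, ← pathEdges_map]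

section Surgery

/- In the first three identities the tail `t :: B` of the first path, left over by the tadpole, is
glued to the initial part `C` of the path that contributes the edge leaving `t` along the cycle. -/

variable (x y z o a t : V) (T B C D R : List V)

theorem pathEdges_add_eq_tadpoleEdges_of_start :
    pathEdges (a :: (T ++ t :: B)) + pathEdges (C ++ t :: a :: x :: D) =
      tadpoleEdges x a (T ++ [t]) + (pathEdges (C ++ t :: B) + pathEdges (x :: D)) := by
  have hP := pathEdges_append_cons (a :: T) B t
  have hQ := pathEdges_append_cons C (a :: x :: D) t
  have hcycle := pathEdges_append_cons (a :: T) [a] t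
  have hglued := pathEdges_append_cons C B t
  simp only [tadpoleEdges, cycleEdges, List.cons_append, List.append_assoc, List.nil_append,
    pathEdges_cons_cons, pathEdges_singleton, ← Multiset.singleton_add] at *
  rw [hP, hQ, hcycle, hglued, Sym2.eq_swap (a := a) (b := x)]
  abel

theorem pathEdges_add_eq_tadpoleEdges_of_second :
    pathEdges (x :: a :: (T ++ t :: B)) + pathEdges (C ++ t :: a :: D) =
      tadpoleEdges x a (T ++ [t]) + (pathEdges (C ++ t :: B) + pathEdges (a :: D)) := by
  have hP := pathEdges_append_cons (a :: T) B t
  have hQ := pathEdges_append_cons C (a :: D) t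
  have hcycle := pathEdges_append_cons (a :: T) [a] t
  have hglued := pathEdges_append_cons C B t
  simp only [tadpoleEdges, cycleEdges, List.cons_append, List.append_assoc, List.nil_append,
    pathEdges_cons_cons, pathEdges_singleton, ← Multiset.singleton_add] at *
  rw [hP, hQ, hcycle, hglued]
  abel

/- The cycle takes `s(t, o)` from the second path and `s(z, a)` from the third; in return the second
path takes `s(o, a)` from the first and is rerouted along `x, z, y, o, a`. -/
theorem pathEdges_add_add_eq_tadpoleEdges :
    pathEdges (z :: o :: a :: (T ++ t :: B)) + pathEdges (C ++ t :: o :: y :: z :: x :: a :: R) +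
        pathEdges (a :: z :: D) =
      tadpoleEdges x a (T ++ [t, o, z]) +
        (pathEdges (C ++ t :: B) + pathEdges (x :: z :: y :: o :: a :: R) +
          pathEdges (z :: D)) := by
  have hP := pathEdges_append_cons (a :: T) B t
  have hQ := pathEdges_append_cons C (o :: y :: z :: x :: a :: R) t
  have hcycle := pathEdges_append_cons (a :: T) [o, z, a] t
  have hglued := pathEdges_append_cons C B t
  simp only [tadpoleEdges, cycleEdges, List.cons_append, List.append_assoc, List.nil_append,
    pathEdges_cons_cons, pathEdges_singleton, ← Multiset.singleton_add] at *
  rw [hP, hQ, hcycle, hglued, Sym2.eq_swap (a := x) (b := z), Sym2.eq_swap (a := z) (b := y),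
    Sym2.eq_swap (a := y) (b := o), Sym2.eq_swap (a := z) (b := o),
    Sym2.eq_swap (a := o) (b := a), Sym2.eq_swap (a := a) (b := z)]
  abel

theorem cycleEdges_add_eq_tadpoleEdges :
    cycleEdges x (a :: (T ++ t :: B)) + {s(t, a)} =
      tadpoleEdges x a (T ++ [t]) + pathEdges (t :: B ++ [x]) := by
  have hP := pathEdges_append_cons (a :: T) (B ++ [x]) t
  have hcycle := pathEdges_append_cons (a :: T) [a] t
  simp only [tadpoleEdges, cycleEdges, List.cons_append, List.append_assoc, List.nil_append,
    pathEdges_cons_cons, pathEdges_singleton, ← Multiset.singleton_add] at *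
  rw [hP, hcycle]
  abel

end Surgery

theorem pathEdges_subset_cycleEdges (a : V) (l : List V) : pathEdges l ⊆ cycleEdges a l := by
  intro e he
  obtain ⟨l₁, x, y, l₂, rfl, rfl⟩ := mem_pathEdges_iff.1 he
  exact mem_pathEdges_iff.2 ⟨a :: l₁, x, y, l₂ ++ [a], by simp, rfl⟩

theorem cycleEdges_reverse (a : V) (l : List V) : cycleEdges a l.reverse = cycleEdges a l := by
  rw [cycleEdges, ← pathEdges_reverse]
  simp [cycleEdges]

theorem card_cycleEdges (a : V) (l : List V) : (cycleEdges a l).card = l.length + 1 := by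
  simp [cycleEdges, card_pathEdges]

theorem exists_cycleEdges_eq_cons {a : V} {l : List V} (hl : (a :: l).Nodup) {e : Sym2 V}
    (he : e ∈ pathEdges l) :
    ∃ l' : List V, l'.Nodup ∧ cycleEdges a l = e ::ₘ pathEdges l' := by
  obtain ⟨l₁, x, y, l₂, rfl, rfl⟩ := mem_pathEdges_iff.1 he
  refine ⟨y :: l₂ ++ a :: (l₁ ++ [x]), ?_, ?_⟩
  · have hperm : (a :: (l₁ ++ [x]) ++ y :: l₂).Perm (y :: l₂ ++ a :: (l₁ ++ [x])) :=
      List.perm_append_comm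
    exact hperm.nodup_iff.1 (by simpa using hl)
  · have hcycle := pathEdges_append_cons (a :: l₁) (y :: (l₂ ++ [a])) x
    have hpath := pathEdges_append_cons (y :: l₂) (l₁ ++ [x]) a
    simp only [cycleEdges, List.cons_append, List.append_assoc, pathEdges_cons_cons] at *
    rw [hcycle, hpath, Multiset.add_cons, add_comm]

end VertexLists

section PathDecomposable

variable {V W : Type*}

/-- The multiset of edges `M` is the disjoint union of the edges of at most `N` paths, each given
by its vertex sequence. -/
def PathDecomposable (M : Multiset (Sym2 V)) (N : ℕ) : Prop :=
  ∃ P : List (List V), (∀ l ∈ P, l.Nodup) ∧ (P.map pathEdges).sum = M ∧ P.length ≤ N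

theorem PathDecomposable.of_nodup {l : List V} (hl : l.Nodup) :
    PathDecomposable (pathEdges l) 1 :=
  ⟨[l], by simpa using hl, by simp, le_rfl⟩

theorem PathDecomposable.add {M₁ M₂ : Multiset (Sym2 V)} {N₁ N₂ : ℕ}
    (h₁ : PathDecomposable M₁ N₁) (h₂ : PathDecomposable M₂ N₂) :
    PathDecomposable (M₁ + M₂) (N₁ + N₂) := by
  obtain ⟨P₁, hP₁, rfl, hN₁⟩ := h₁
  obtain ⟨P₂, hP₂, rfl, hN₂⟩ := h₂
  refine ⟨P₁ ++ P₂, ?_, by simp, by simpa using add_le_add hN₁ hN₂⟩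
  simpa only [List.mem_append, or_imp, forall_and] using ⟨hP₁, hP₂⟩

theorem PathDecomposable.sum {ι : Type*} {s : Finset ι} {F : ι → Multiset (Sym2 V)}
    (h : ∀ i ∈ s, PathDecomposable (F i) 1) : PathDecomposable (∑ i ∈ s, F i) s.card := by
  classical
  induction s using Finset.induction_on with
  | empty => exact ⟨[], by simp, rfl, le_rfl⟩
  | insert i s hi ih =>
    rw [Finset.sum_insert hi, Finset.card_insert_of_notMem hi, add_comm s.card]
    exact (h i (Finset.mem_insert_self i s)).add
      (ih fun j hj => h j (Finset.mem_insert_of_mem hj))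

theorem PathDecomposable.map {M : Multiset (Sym2 V)} {N : ℕ} {φ : V → W}
    (hφ : Function.Injective φ) (h : PathDecomposable M N) :
    PathDecomposable (M.map (Sym2.map φ)) N := by
  obtain ⟨P, hP, rfl, hN⟩ := h
  refine ⟨P.map (List.map φ), ?_, ?_, by simpa using hN⟩
  · simpa using fun l hl => (hP l hl).map hφ
  · rw [← Multiset.coe_mapAddMonoidHom, map_list_sum, List.map_map, List.map_map]
    simp only [Function.comp_def, Multiset.coe_mapAddMonoidHom, pathEdges_map]

theorem exists_isPath_edges_eq {G : SimpleGraph V} {l : List V} (hne : l ≠ []) (hl : l.Nodup)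
    (hG : ∀ e ∈ pathEdges l, e ∈ G.edgeSet) :
    ∃ p : Σ u v : V, G.Walk u v,
      p.2.2.IsPath ∧ (p.2.2.edges : Multiset (Sym2 V)) = pathEdges l := by
  have hchain : l.IsChain G.Adj :=
    List.isChain_iff_forall_rel_of_append_cons_cons.2 fun x y l₁ l₂ h =>
      hG s(x, y) (mem_pathEdges_iff.2 ⟨l₁, x, y, l₂, h, rfl⟩)
  refine ⟨⟨_, _, Walk.ofSupport l hne hchain⟩, ?_, ?_⟩
  · rwa [Walk.isPath_def, Walk.support_ofSupport]
  · simp only [Walk.edges_eq_zipWith_support, Walk.support_ofSupport, pathEdges]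

theorem exists_isPath_flatMap_edges_eq {G : SimpleGraph V} (P : List (List V))
    (hnodup : ∀ l ∈ P, l.Nodup) (hG : ∀ l ∈ P, ∀ e ∈ pathEdges l, e ∈ G.edgeSet) :
    ∃ Q : List (Σ u v : V, G.Walk u v), (∀ p ∈ Q, p.2.2.IsPath) ∧
      (Q.flatMap fun p => p.2.2.edges : Multiset (Sym2 V)) = (P.map pathEdges).sum ∧
      Q.length ≤ P.length := by
  induction P with
  | nil => exact ⟨[], by simp⟩
  | cons l P ih =>
    rw [List.forall_mem_cons] at hnodup hG
    obtain ⟨Q, hQ, hsum, hlen⟩ := ih hnodup.2 hG.2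
    by_cases hne : l = []
    · exact ⟨Q, hQ, by simp [hne, hsum, pathEdges], hlen.trans (Nat.le_succ _)⟩
    · obtain ⟨p, hp, hpe⟩ := exists_isPath_edges_eq hne hnodup.1 hG.1
      refine ⟨p :: Q, List.forall_mem_cons.2 ⟨hp, hQ⟩, ?_, Nat.succ_le_succ hlen⟩
      rw [List.flatMap_cons, ← Multiset.coe_add, hpe, hsum, List.map_cons, List.sum_cons]

theorem PathDecomposable.exists_isPathDecomp {G : SimpleGraph V} [Fintype G.edgeSet] {N : ℕ}
    (h : PathDecomposable G.edgeFinset.val N) :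
    ∃ P : List (Σ u v : V, G.Walk u v), IsPathDecomp G P ∧ P.length ≤ N := by
  obtain ⟨P, hnodup, hsum, hN⟩ := h
  have hG : ∀ l ∈ P, ∀ e ∈ pathEdges l, e ∈ G.edgeSet := fun l hl e he =>
    mem_edgeFinset.1 <| Multiset.mem_of_le
      (hsum ▸ List.single_le_sum (fun _ _ => Multiset.zero_le _) _ (List.mem_map_of_mem hl)) he
  obtain ⟨Q, hpath, hQ, hlen⟩ := exists_isPath_flatMap_edges_eq P hnodup hG
  rw [hsum] at hQ
  have hnodupQ : (Q.flatMap fun p => p.2.2.edges).Nodup :=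
    Multiset.coe_nodup.1 (hQ ▸ G.edgeFinset.nodup)
  refine ⟨Q, ⟨hpath, (List.nodup_flatMap.1 hnodupQ).2, fun e => ?_⟩, hlen.trans hN⟩
  rw [← mem_edgeFinset, ← Finset.mem_val, ← hQ, Multiset.mem_coe, List.mem_flatMap]

end PathDecomposable

section Transport

variable {V W : Type*}

theorem exists_equiv_map_list_eq [Fintype V] [Fintype W] (hcard : Fintype.card V = Fintype.card W)
    {l : List V} {l' : List W} (hl : l.Nodup) (hl' : l'.Nodup) (hlen : l.length = l'.length) :
    ∃ φ : V ≃ W, l.map φ = l' := by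
  let e : V ≃ W := Fintype.equivOfCardEq hcard
  obtain ⟨σ, hσ⟩ := Equiv.Perm.exists_extending_pair (fun i => e (l.get i))
    (fun i => l'.get (i.cast hlen)) (e.injective.comp hl.injective_get)
    (hl'.injective_get.comp (Fin.cast_injective hlen))
  refine ⟨e.trans σ, List.ext_get (by simpa using hlen) fun i hi _ => ?_⟩
  simpa using hσ ⟨i, by simpa using hi⟩

theorem mem_tadpoleEdges_iff {m : ℕ} [NeZero m] {f : ZMod m → V} {x a : V} {l : List V}
    (hcycle : a :: l = (List.range m).map fun i : ℕ => f i) {e : Sym2 V} :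
    e ∈ tadpoleEdges x a l ↔ (∃ i, e = s(f i, f (i + 1))) ∨ e = s(f 0, x) := by
  have ha : a = f 0 := by
    have hhead := congrArg List.head? hcycle
    simpa [List.head?_range, NeZero.ne m] using hhead
  have hclosed : a :: l ++ [a] = (List.range (m + 1)).map fun i : ℕ => f i := by
    rw [List.range_succ, List.map_append, ← hcycle, ha, List.map_singleton, ZMod.natCast_self]
  have hcyclic : e ∈ cycleEdges a l ↔ ∃ i, e = s(f i, f (i + 1)) := by
    rw [cycleEdges, hclosed, pathEdges_map_range_succ (fun i : ℕ => f i)]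
    simp only [Multiset.mem_map, Multiset.mem_range, Nat.cast_add, Nat.cast_one]
    constructor
    · rintro ⟨i, -, rfl⟩
      exact ⟨i, rfl⟩
    · rintro ⟨i, rfl⟩
      exact ⟨i.val, i.val_lt, by rw [ZMod.natCast_zmod_val]⟩
  rw [tadpoleEdges, Multiset.mem_cons, hcyclic, ha, Sym2.eq_swap, or_comm]

theorem nodup_cons_map_range {m : ℕ} {f : ZMod m → V} (hf : Function.Injective f) {w : V}
    (hw : w ∉ Set.range f) : (w :: (List.range m).map fun i : ℕ => f i).Nodup := by
  refine List.nodup_cons.2 ⟨fun h => ?_, List.nodup_range.map_on fun i hi j hj hij => ?_⟩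
  · obtain ⟨i, -, hi⟩ := List.mem_map.1 h
    exact hw ⟨i, hi⟩
  · exact ((ZMod.natCast_eq_natCast_iff _ _ _).1 (hf hij)).eq_of_lt_of_lt
      (List.mem_range.1 hi) (List.mem_range.1 hj)

theorem map_edgeFinset_top_val [Fintype V] [Fintype W] [DecidableEq V] [DecidableEq W]
    (φ : V ≃ W) :
    (⊤ : SimpleGraph V).edgeFinset.val.map (Sym2.map φ) =
      (⊤ : SimpleGraph W).edgeFinset.val := by
  change ((⊤ : SimpleGraph V).edgeFinset.map φ.toEmbedding.sym2Map).val = _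
  congr 1
  ext e
  obtain ⟨e, rfl⟩ : ∃ e', φ.toEmbedding.sym2Map e' = e :=
    ⟨Sym2.map φ.symm e, by simp [Sym2.map_map]⟩
  rw [Finset.mem_map', mem_edgeFinset, mem_edgeFinset]
  induction e with | _ x y
  simp

/-- In the complete graph on `V`, the complement of some tadpole with a cycle of length `m` is a
disjoint union of at most `N` paths. -/
def TadpoleComplementDecomposable (V : Type*) [Fintype V] [DecidableEq V] (m N : ℕ) : Prop :=
  ∃ (x a : V) (l : List V) (M : Multiset (Sym2 V)), (x :: a :: l).Nodup ∧ l.length + 1 = m ∧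
    (⊤ : SimpleGraph V).edgeFinset.val = tadpoleEdges x a l + M ∧ PathDecomposable M N

theorem TadpoleComplementDecomposable.exists_isPathDecomp [Fintype V] [DecidableEq V] {n m N : ℕ}
    [NeZero m] (h : TadpoleComplementDecomposable V m N) (hcard : Fintype.card V = n)
    {f : ZMod m → Fin n} (hf : Function.Injective f) {w : Fin n} (hw : w ∉ Set.range f) :
    ∃ P : List (Σ x y : Fin n,
        ((⊤ : SimpleGraph (Fin n)).deleteEdges
          {e | (∃ i, e = s(f i, f (i + 1))) ∨ e = s(f 0, w)}).Walk x y),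
      IsPathDecomp ((⊤ : SimpleGraph (Fin n)).deleteEdges
          {e | (∃ i, e = s(f i, f (i + 1))) ∨ e = s(f 0, w)}) P ∧ P.length ≤ N := by
  classical
  obtain ⟨x, a, l, M, hnodup, hlen, htop, hM⟩ := h
  obtain ⟨φ, hφ⟩ := exists_equiv_map_list_eq (hcard.trans (Fintype.card_fin n).symm) hnodup
    (nodup_cons_map_range hf hw) (by simpa using hlen)
  rw [List.map_cons, List.map_cons, List.cons_eq_cons] at hφ
  obtain ⟨rfl, hcycle⟩ := hφ
  apply PathDecomposable.exists_isPathDecomp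
  convert hM.map φ.injective
  have hsplit : (⊤ : SimpleGraph (Fin n)).edgeFinset.val =
      tadpoleEdges (φ x) (φ a) (l.map φ) + M.map (Sym2.map φ) := by
    rw [← map_edgeFinset_top_val φ, htop, Multiset.map_add, tadpoleEdges_map]
  have hdisj := Multiset.nodup_add.1 (hsplit ▸ (⊤ : SimpleGraph (Fin n)).edgeFinset.nodup)
  refine (Multiset.Nodup.ext (Finset.nodup _) hdisj.2.1).2 fun e => ?_
  rw [Finset.mem_val, mem_edgeFinset, edgeSet_deleteEdges, Set.mem_sdiff, Set.mem_ofPred_eq,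
    ← mem_tadpoleEdges_iff hcycle, ← mem_edgeFinset, ← Finset.mem_val, hsplit, Multiset.mem_add]
  have hnotMem : e ∈ tadpoleEdges (φ x) (φ a) (l.map φ) → e ∉ M.map (Sym2.map φ) :=
    fun he => Multiset.disjoint_left.1 hdisj.2.2 he
  tauto

end Transport

section Zigzag

/-- The `i`-th term of the sequence `0, 1, -1, 2, -2, …`. -/
def zigzagShift (i : ℕ) : ℤ :=
  if i % 2 = 0 then -(i / 2) else (i + 1) / 2

theorem zigzagShift_injective : Function.Injective zigzagShift := by
  intro i j h
  simp only [zigzagShift] at h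
  split_ifs at h <;> omega

theorem exists_lt_zigzagShift_eq_iff {n : ℕ} {v : ℤ} :
    (∃ i < n, zigzagShift i = v) ↔ -(n : ℤ) < 2 * v ∧ 2 * v ≤ n := by
  simp only [zigzagShift]
  constructor
  · rintro ⟨i, hi, rfl⟩
    split_ifs <;> omega
  · rintro ⟨hlo, hhi⟩
    rcases le_or_gt v 0 with h | h
    · exact ⟨(-2 * v).toNat, by omega, by split_ifs <;> omega⟩
    · exact ⟨(2 * v - 1).toNat, by omega, by split_ifs <;> omega⟩

theorem zigzagShift_mem_Ioc {i k : ℕ} (hi : i < 2 * k) :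
    zigzagShift i ∈ Set.Ioc (-k : ℤ) k := by
  have := exists_lt_zigzagShift_eq_iff.1 ⟨i, hi, rfl⟩
  simp only [Set.mem_Ioc]
  omega

/-- The `n` consecutive terms of the zigzag `c, c + 1, c - 1, c + 2, …` that start at position `s`,
where positions are counted from `0`. -/
def zigzag (c : ℤ) (s n : ℕ) : List ℤ :=
  (List.range' s n).map fun i => c + zigzagShift i

variable (c : ℤ) (s m n : ℕ)

@[simp]
theorem length_zigzag : (zigzag c s n).length = n := by
  simp [zigzag]

theorem zigzag_succ : zigzag c s (n + 1) = (c + zigzagShift s) :: zigzag c (s + 1) n := by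
  simp [zigzag, List.range'_succ]

theorem zigzag_add : zigzag c s (m + n) = zigzag c s m ++ zigzag c (s + m) n := by
  rw [zigzag, ← List.range'_append_1, List.map_append]; rfl

theorem zigzag_eq_append_cons {i n : ℕ} (hi : i < n) :
    zigzag c s n =
      zigzag c s i ++ (c + zigzagShift (s + i)) :: zigzag c (s + i + 1) (n - (i + 1)) := by
  rw [← zigzag_succ, ← zigzag_add]
  congr 1
  omega

theorem zigzag_zero_eq_cons_append {r n : ℕ} (hr : r + 2 < n) :
    zigzag 0 0 n =
      0 :: (zigzag 0 1 (r + 1) ++ zigzagShift (r + 2) :: zigzag 0 (r + 3) (n - (r + 3))) := by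
  rw [zigzag_eq_append_cons _ _ hr, zero_add, zero_add, zigzag_succ]
  rfl

theorem mem_zigzag {c x : ℤ} {s n : ℕ} :
    x ∈ zigzag c s n ↔ ∃ i, s ≤ i ∧ i < s + n ∧ c + zigzagShift i = x := by
  simp [zigzag, List.mem_range'_1, and_assoc]

theorem nodup_zigzag : (zigzag c s n).Nodup :=
  (List.nodup_range' (step := 1)).map fun _ _ h => zigzagShift_injective (add_left_cancel h)

theorem intCast_zmod_injOn_Ico (N : ℕ) (lo : ℤ) :
    Set.InjOn (Int.cast : ℤ → ZMod N) (Set.Ico lo (lo + N)) := by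
  rintro x ⟨hx, hx'⟩ y ⟨hy, hy'⟩ hxy
  have hdvd := (ZMod.intCast_eq_intCast_iff_dvd_sub x y N).1 hxy
  have := Int.eq_zero_of_abs_lt_dvd hdvd (abs_lt.2 ⟨by omega, by omega⟩)
  omega

theorem nodup_map_intCast {N : ℕ} (lo : ℤ) {l : List ℤ} (hl : l.Nodup)
    (hlo : ∀ x ∈ l, x ∈ Set.Ico lo (lo + N)) : (l.map (Int.cast : ℤ → ZMod N)).Nodup :=
  hl.map_on fun x hx y hy hxy => intCast_zmod_injOn_Ico N lo (hlo x hx) (hlo y hy) hxy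

theorem nodup_map_cast_zigzag {s n k : ℕ} (hn : s + n ≤ 2 * k) :
    ((zigzag c s n).map (Int.cast : ℤ → ZMod (2 * k))).Nodup := by
  refine nodup_map_intCast (c - k + 1) (nodup_zigzag _ _ _) fun x hx => ?_
  obtain ⟨i, -, hi, rfl⟩ := mem_zigzag.1 hx
  obtain ⟨hlo, hhi⟩ := zigzagShift_mem_Ioc (hi.trans_le hn)
  exact ⟨by omega, by push_cast; omega⟩

/-- The `c`-th Hamiltonian path `c, c + 1, c - 1, …, c + k` of Walecki's decomposition. -/
def waleckiPath (k : ℕ) (c : ℤ) : List (ZMod (2 * k)) :=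
  (zigzag c 0 (2 * k)).map (↑)

theorem nodup_waleckiPath (k : ℕ) : (waleckiPath k c).Nodup :=
  nodup_map_cast_zigzag c (zero_add _).le

theorem reverse_waleckiPath (k : ℕ) : (waleckiPath k c).reverse = waleckiPath k (c + k) := by
  refine List.ext_getElem (by simp [waleckiPath]) fun i hi _ => ?_
  have hi : i < 2 * k := by simpa [waleckiPath] using hi
  have hshift : c + zigzagShift (2 * k - 1 - i) = c + k + zigzagShift i ∨
      c + zigzagShift (2 * k - 1 - i) + (2 * k : ℕ) = c + k + zigzagShift i := by
    simp only [zigzagShift]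
    split_ifs <;> omega
  have hcast : ((c + zigzagShift (2 * k - 1 - i) : ℤ) : ZMod (2 * k)) =
      ((c + k + zigzagShift i : ℤ) : ZMod (2 * k)) := by
    rcases hshift with h | h
    · rw [h]
    · rw [← h, Int.cast_add _ ((2 * k : ℕ) : ℤ), Int.cast_natCast, ZMod.natCast_self, add_zero]
  simpa [waleckiPath, zigzag] using hcast

theorem pathEdges_waleckiPath_add (k : ℕ) :
    pathEdges (waleckiPath k (c + k)) = pathEdges (waleckiPath k c) := by
  rw [← reverse_waleckiPath, pathEdges_reverse]

theorem pathEdges_waleckiPath_pred (k : ℕ) [NeZero k] :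
    pathEdges (waleckiPath k (k - 1 : ℕ)) = pathEdges (waleckiPath k (-1)) := by
  rw [← pathEdges_waleckiPath_add (-1), Nat.cast_pred (NeZero.pos k), neg_add_eq_sub]

theorem mem_pathEdges_zigzag {i : ℕ} (hi : i + 1 < n) :
    s(c + zigzagShift i, c + zigzagShift (i + 1)) ∈ pathEdges (zigzag c 0 n) := by
  obtain ⟨r, rfl⟩ := Nat.exists_eq_add_of_lt hi
  refine mem_pathEdges_iff.2 ⟨zigzag c 0 i, _, _, zigzag c (i + 2) r, ?_, rfl⟩
  rw [show i + 1 + r + 1 = i + (r + 1 + 1) by ring, zigzag_add, zero_add, zigzag_succ, zigzag_succ]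

variable {k : ℕ} [NeZero k]

theorem exists_eq_add_zigzagShift (x : ZMod (2 * k)) :
    ∃ i < 2 * k, ((c + zigzagShift i : ℤ) : ZMod (2 * k)) = x := by
  obtain ⟨hlo, hhi⟩ := (x - c).valMinAbs_mem_Ioc
  set v := (x - c).valMinAbs with hv
  obtain ⟨i, hi, hshift⟩ : ∃ i < 2 * k, zigzagShift i = v :=
    exists_lt_zigzagShift_eq_iff.2 (by push_cast at hlo hhi ⊢; omega)
  exact ⟨i, hi, by rw [hshift, Int.cast_add, hv, ZMod.coe_valMinAbs, add_sub_cancel]⟩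

theorem mem_pathEdges_waleckiPath {c : ℤ} {x y : ZMod (2 * k)} (hxy : x ≠ y)
    (hsum : x + y = 2 * c ∨ x + y = 2 * c + 1) : s(x, y) ∈ pathEdges (waleckiPath k c) := by
  obtain ⟨i, hi, rfl⟩ := exists_eq_add_zigzagShift c x
  obtain ⟨j, hj, rfl⟩ := exists_eq_add_zigzagShift c y
  have hne : i ≠ j := by rintro rfl; exact hxy rfl
  have hedge : ∀ i, i + 1 < 2 * k → s(((c + zigzagShift i : ℤ) : ZMod (2 * k)),
      ((c + zigzagShift (i + 1) : ℤ) : ZMod (2 * k))) ∈ pathEdges (waleckiPath k c) := by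
    intro i hi
    rw [waleckiPath, pathEdges_map]
    exact Multiset.mem_map_of_mem _ (mem_pathEdges_zigzag c (2 * k) hi)
  obtain ⟨ε, hε, d, hd⟩ : ∃ ε : ℤ, (0 ≤ ε ∧ ε ≤ 1) ∧
      ((2 * k : ℕ) : ℤ) ∣ zigzagShift i + zigzagShift j - ε := by
    simp only [← ZMod.intCast_zmod_eq_zero_iff_dvd]
    rcases hsum with h | h
    · exact ⟨0, by norm_num, by push_cast at h ⊢; linear_combination h⟩
    · exact ⟨1, by norm_num, by push_cast at h ⊢; linear_combination h⟩
  have hconsec : i + 1 = j ∨ j + 1 = i := by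
    have hzi := zigzagShift_mem_Ioc hi
    have hzj := zigzagShift_mem_Ioc hj
    push_cast [Set.mem_Ioc] at hd hzi hzj
    have hd_nonneg : 0 ≤ d := by
      by_contra! h
      nlinarith
    have hd_le : d ≤ 1 := by
      by_contra! h
      nlinarith
    simp only [zigzagShift] at hd hzi hzj
    interval_cases d <;> split_ifs at hd hzi hzj <;> omega
  rcases hconsec with rfl | rfl
  · exact hedge i hj
  · exact Sym2.eq_swap ▸ hedge j hi

theorem exists_lt_eq_two_mul_or (x : ZMod (2 * k)) :
    ∃ c < k, x = 2 * (c : ℕ) ∨ x = 2 * (c : ℕ) + 1 := by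
  have hlt := x.val_lt
  have hx : x = ((2 * (x.val / 2) + x.val % 2 : ℕ) : ZMod (2 * k)) := by
    rw [Nat.div_add_mod, ZMod.natCast_zmod_val]
  refine ⟨x.val / 2, by omega, ?_⟩
  rcases Nat.mod_two_eq_zero_or_one x.val with h | h
  · exact .inl (by rw [h] at hx; exact_mod_cast hx)
  · exact .inr (by rw [h] at hx; exact_mod_cast hx)

theorem sum_pathEdges_waleckiPath :
    ∑ c ∈ Finset.range k, pathEdges (waleckiPath k c) =
      (⊤ : SimpleGraph (ZMod (2 * k))).edgeFinset.val := by
  symm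
  refine Multiset.eq_of_le_of_card_le ?_ ?_
  · refine (Multiset.le_iff_subset (Finset.nodup _)).2 fun e he => ?_
    induction e with | _ x y
    obtain ⟨c, hc, hsum⟩ := exists_lt_eq_two_mul_or (x + y)
    exact Multiset.mem_sum.2 ⟨c, Finset.mem_range.2 hc,
      mem_pathEdges_waleckiPath (by simpa using he) (mod_cast hsum)⟩
  · have hchoose : (2 * k).choose 2 = k * (2 * k - 1) := by
      rw [Nat.choose_two_right, mul_assoc, Nat.mul_div_cancel_left _ two_pos]
    rw [Finset.card_val, card_edgeFinset_top_eq_card_choose_two, ZMod.card, hchoose]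
    simp [card_pathEdges, waleckiPath]

end Zigzag

section OddOrder

variable {k : ℕ}

theorem sum_cycleEdges_waleckiPath [NeZero k] :
    ∑ c ∈ Finset.range k, cycleEdges none ((waleckiPath k c).map some) =
      (⊤ : SimpleGraph (Option (ZMod (2 * k)))).edgeFinset.val := by
  have hnone (x : ZMod (2 * k)) :
      ∃ c < k, s(none, some x) ∈ cycleEdges none ((waleckiPath k (c : ℕ)).map some) := by
    have hhead : s(none, some x) ∈ cycleEdges none ((waleckiPath k (x.val : ℕ)).map some) := by
      obtain ⟨r, hr⟩ := Nat.exists_eq_succ_of_ne_zero (NeZero.ne (2 * k))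
      simp [waleckiPath, hr, zigzag_succ, zigzagShift, cycleEdges]
    rcases lt_or_ge x.val k with h | h
    · exact ⟨x.val, h, hhead⟩
    · refine ⟨x.val - k, by have := x.val_lt; omega, ?_⟩
      rwa [← cycleEdges_reverse, ← List.map_reverse, reverse_waleckiPath, Nat.cast_sub h,
        sub_add_cancel]
  symm
  refine Multiset.eq_of_le_of_card_le ?_ ?_
  · refine (Multiset.le_iff_subset (Finset.nodup _)).2 fun e he => ?_
    simp only [Multiset.mem_sum, Finset.mem_range]
    induction e with | _ x y
    rcases x with - | x <;> rcases y with - | y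
    · simp at he
    · exact hnone y
    · exact Sym2.eq_swap ▸ hnone x
    · obtain ⟨c, hc, hsum⟩ := exists_lt_eq_two_mul_or (x + y)
      have hmem := mem_pathEdges_waleckiPath (c := c) (by simpa using he) (mod_cast hsum)
      refine ⟨c, hc, pathEdges_subset_cycleEdges _ _ ?_⟩
      rw [pathEdges_map]
      exact Multiset.mem_map_of_mem (Sym2.map some) hmem
  · have hchoose : (2 * k + 1).choose 2 = k * (2 * k + 1) := by
      rw [Nat.choose_two_right, Nat.add_sub_cancel, mul_left_comm,
        Nat.mul_div_cancel_left _ two_pos, mul_comm]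
    rw [Finset.card_val, card_edgeFinset_top_eq_card_choose_two, Fintype.card_option, ZMod.card,
      hchoose]
    simp [card_cycleEdges, waleckiPath]

theorem sum_range_succ_skip {M : Type*} [AddCommMonoid M] {n p : ℕ} (hp : p ≤ n) (F : ℕ → M) :
    ∑ i ∈ Finset.range (n + 1), F i =
      F p + ∑ i ∈ Finset.range n, F (if i < p then i else i + 1) := by
  rw [Finset.sum_range, Fin.sum_univ_succAbove _ ⟨p, Nat.lt_succ_of_le hp⟩, Finset.sum_range]
  congr 1
  refine Finset.sum_congr rfl fun i _ => ?_
  simp only [Fin.succAbove, Fin.lt_def, Fin.val_castSucc]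
  split_ifs <;> rfl

theorem PathDecomposable.sum_cycleEdges {V : Type*} {n : ℕ} {a : V} {l : ℕ → List V} {g : ℕ → V}
    (hl : ∀ i < n, (a :: l i).Nodup) (hg : ((List.range (n + 1)).map g).Nodup)
    (hmem : ∀ i < n, s(g i, g (i + 1)) ∈ pathEdges (l i)) :
    PathDecomposable (∑ i ∈ Finset.range n, cycleEdges a (l i)) (n + 1) := by
  have hopen (i : ℕ) (hi : i < n) := exists_cycleEdges_eq_cons (hl i hi) (hmem i hi)
  choose! l' hl' heq using hopen
  have hsum : ∑ i ∈ Finset.range n, cycleEdges a (l i) =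
      ∑ i ∈ Finset.range n, pathEdges (l' i) + pathEdges ((List.range (n + 1)).map g) := by
    have hremoved : pathEdges ((List.range (n + 1)).map g) =
        ∑ i ∈ Finset.range n, {s(g i, g (i + 1))} := by
      rw [pathEdges_map_range_succ, ← Multiset.sum_map_singleton (Multiset.map _ _),
        Multiset.map_map]
      rfl
    rw [hremoved, ← Finset.sum_add_distrib]
    refine Finset.sum_congr rfl fun i hi => ?_
    rw [heq i (Finset.mem_range.1 hi), ← Multiset.singleton_add, add_comm]
  have hpaths := PathDecomposable.sum fun i hi => .of_nodup (hl' i (Finset.mem_range.1 hi))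
  rw [Finset.card_range] at hpaths
  exact hsum ▸ hpaths.add (.of_nodup hg)

theorem nodup_none_cons_waleckiPath (c : ℤ) :
    (none :: (waleckiPath k c).map some).Nodup :=
  List.nodup_cons.2 ⟨by simp, (nodup_waleckiPath c k).map (Option.some_injective _)⟩

theorem pathDecomposable_sum_cycleEdges_skip (n p : ℕ) :
    PathDecomposable (∑ i ∈ Finset.range n, cycleEdges none
      ((waleckiPath (n + 2) (((if i < p then i else i + 1) + 1 : ℕ) : ℤ)).map some)) (n + 1) := by
  -- The removed edges form the path `1, 2, …, p + 1, p + 3, …, n + 2`.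
  let g (i : ℕ) : ℤ := if i < p + 1 then i + 1 else i + 2
  have hg_mem (i : ℕ) (hi : i < n + 1) : g i ∈ Set.Ico (0 : ℤ) (0 + (2 * (n + 2) : ℕ)) := by
    simp only [g, Set.mem_Ico]
    split_ifs <;> omega
  have hg_inj : Function.Injective g := by
    intro i j h
    simp only [g] at h
    split_ifs at h <;> omega
  have hg_cast_inj {i j : ℕ} (hi : i < n + 1) (hj : j < n + 1)
      (h : (g i : ZMod (2 * (n + 2))) = g j) : i = j :=
    hg_inj (intCast_zmod_injOn_Ico _ 0 (hg_mem i hi) (hg_mem j hj) h)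
  refine PathDecomposable.sum_cycleEdges (g := fun i => some (g i : ZMod (2 * (n + 2))))
    (fun i _ => nodup_none_cons_waleckiPath _) ?_ fun i hi => ?_
  · exact List.nodup_range.map_on fun i hi j hj h =>
      hg_cast_inj (List.mem_range.1 hi) (List.mem_range.1 hj) (Option.some_injective _ h)
  · rw [pathEdges_map]
    refine Multiset.mem_map_of_mem (Sym2.map some) (mem_pathEdges_waleckiPath (fun h => ?_) ?_)
    · exact absurd (hg_cast_inj (by omega) (by omega) h) i.lt_succ_self.ne
    · have hsum : g i + g (i + 1) = 2 * ((if i < p then i else i + 1) + 1 : ℕ) ∨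
          g i + g (i + 1) = 2 * ((if i < p then i else i + 1) + 1 : ℕ) + 1 := by
        simp only [g]
        split_ifs <;> push_cast <;> omega
      exact_mod_cast hsum.imp (congrArg (Int.cast : ℤ → ZMod (2 * (n + 2))))
        (congrArg (Int.cast : ℤ → ZMod (2 * (n + 2))))

theorem zigzagShift_cast_ne_zero_and_ne_one {i : ℕ} (hi : 2 ≤ i) (hik : i < 2 * k) :
    ((zigzagShift i : ℤ) : ZMod (2 * k)) ≠ 0 ∧ ((zigzagShift i : ℤ) : ZMod (2 * k)) ≠ 1 := by
  have hshift : zigzagShift i ∈ Set.Ico (-k + 1 : ℤ) (-k + 1 + (2 * k : ℕ)) := by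
    have := zigzagShift_mem_Ioc hik
    simp only [Set.mem_Ioc, Set.mem_Ico] at this ⊢
    omega
  have hne : zigzagShift i ≠ 0 ∧ zigzagShift i ≠ 1 := by
    simp only [zigzagShift]
    split_ifs <;> omega
  constructor
  · exact_mod_cast fun h => hne.1 (intCast_zmod_injOn_Ico (2 * k) (-k + 1) hshift
      (by simp only [Set.mem_Ico]; omega) h)
  · exact_mod_cast fun h => hne.2 (intCast_zmod_injOn_Ico (2 * k) (-k + 1) hshift
      (by simp only [Set.mem_Ico]; omega) h)

theorem exists_ne_zero_mem_pathEdges_waleckiPath [NeZero k] {i : ℕ} (hi : 2 ≤ i)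
    (hik : i < 2 * k) : ∃ c < k, c ≠ 0 ∧
      s((zigzagShift i : ZMod (2 * k)), 0) ∈ pathEdges (waleckiPath k (c : ℕ)) := by
  obtain ⟨c, hc, hsum⟩ := exists_lt_eq_two_mul_or (zigzagShift i : ZMod (2 * k))
  obtain ⟨hne_zero, hne_one⟩ := zigzagShift_cast_ne_zero_and_ne_one hi hik
  refine ⟨c, hc, ?_, mem_pathEdges_waleckiPath hne_zero (by simpa using hsum)⟩
  rintro rfl
  simp [hne_zero, hne_one] at hsum

theorem tadpoleComplementDecomposable_option_zmod [NeZero k] {m : ℕ} (hm : 3 ≤ m)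
    (hmk : m ≤ 2 * k) : TadpoleComplementDecomposable (Option (ZMod (2 * k))) m (k + 1) := by
  obtain ⟨n, rfl⟩ : ∃ n, k = n + 2 := ⟨k - 2, by omega⟩
  obtain ⟨r, rfl⟩ : ∃ r, m = r + 3 := ⟨m - 3, by omega⟩
  let v (i : ℤ) : Option (ZMod (2 * (n + 2))) := some i
  let t := zigzagShift (r + 2)
  let T := zigzag 0 1 (r + 1)
  let B := zigzag 0 (r + 3) (2 * (n + 2) - (r + 2 + 1))
  have hpath : (waleckiPath (n + 2) 0).map some = v 0 :: (T.map v ++ v t :: B.map v) := by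
    simp [waleckiPath, zigzag_zero_eq_cons_append (by omega : r + 2 < 2 * (n + 2)), v, t, T, B,
      Function.comp_def]
  obtain ⟨p, hp, hclosing⟩ : ∃ p ≤ n,
      s(v t, v 0) ∈ pathEdges ((waleckiPath (n + 2) (p + 1 : ℕ)).map some) := by
    obtain ⟨c, hc, hc0, hmem⟩ :=
      exists_ne_zero_mem_pathEdges_waleckiPath (k := n + 2) (i := r + 2) (by omega) (by omega)
    obtain ⟨p, rfl⟩ := Nat.exists_eq_succ_of_ne_zero hc0
    refine ⟨p, by omega, ?_⟩
    rw [pathEdges_map]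
    simpa [v, t] using Multiset.mem_map_of_mem (Sym2.map some) hmem
  obtain ⟨Q, hQ, hQ_edges⟩ := exists_cycleEdges_eq_cons (nodup_none_cons_waleckiPath _) hclosing
  have hnodup : (none :: v 0 :: (T.map v ++ v t :: B.map v)).Nodup :=
    hpath ▸ nodup_none_cons_waleckiPath 0
  have hrest : (v t :: B.map v ++ [none]).Nodup :=
    (List.perm_append_singleton none _).nodup_iff.2 (hnodup.sublist (by simp))
  have hM := ((PathDecomposable.of_nodup hrest).add (.of_nodup hQ)).add
    (pathDecomposable_sum_cycleEdges_skip n p)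
  rw [show 1 + 1 + (n + 1) = n + 2 + 1 by ring] at hM
  refine ⟨none, v 0, T.map v ++ [v t], _, hnodup.sublist (by simp), by simp [T], ?_, hM⟩
  rw [← sum_cycleEdges_waleckiPath, Finset.sum_range_succ', sum_range_succ_skip hp,
    hQ_edges, Nat.cast_zero, hpath, ← add_assoc, ← add_assoc, ← cycleEdges_add_eq_tadpoleEdges,
    ← Multiset.singleton_add]
  abel

end OddOrder

section EvenOrder

variable {k : ℕ}

theorem nodup_map_cast_zigzag_append {s p : ℕ} {h : ℤ} (hs : s ≤ 2 * k)
    (hp : ∀ i < p, -(s : ℤ) < 2 * (h + zigzagShift i) ∧ 2 * (h + zigzagShift i) ≤ s) :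
    ((zigzag h 0 p ++ zigzag 0 s (2 * k - s)).map (Int.cast : ℤ → ZMod (2 * k))).Nodup := by
  have hearlier (x : ℤ) (hx : x ∈ zigzag h 0 p) : ∃ i < s, zigzagShift i = x := by
    obtain ⟨i, -, hi, rfl⟩ := mem_zigzag.1 hx
    exact exists_lt_zigzagShift_eq_iff.2 (hp i (by omega))
  have hlater (x : ℤ) (hx : x ∈ zigzag 0 s (2 * k - s)) :
      ∃ i, s ≤ i ∧ i < 2 * k ∧ zigzagShift i = x := by
    obtain ⟨i, hsi, hi, rfl⟩ := mem_zigzag.1 hx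
    exact ⟨i, hsi, by omega, (zero_add _).symm⟩
  refine nodup_map_intCast (-k + 1)
    (List.Nodup.append (nodup_zigzag _ _ _) (nodup_zigzag _ _ _) fun x hx hx' => ?_) fun x hx => ?_
  · obtain ⟨i, hi, rfl⟩ := hearlier x hx
    obtain ⟨j, hj, -, hij⟩ := hlater _ hx'
    have := zigzagShift_injective hij
    omega
  · obtain ⟨i, hi, rfl⟩ : ∃ i < 2 * k, zigzagShift i = x := by
      rcases List.mem_append.1 hx with hx | hx
      · obtain ⟨i, hi, rfl⟩ := hearlier x hx
        exact ⟨i, by omega, rfl⟩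
      · obtain ⟨i, -, hi, rfl⟩ := hlater x hx
        exact ⟨i, hi, rfl⟩
    have := zigzagShift_mem_Ioc hi
    simp only [Set.mem_Ioc, Set.mem_Ico] at this ⊢
    omega

theorem nodup_map_cast_cons_zigzag {m : ℕ} {x : ℤ} (hmk : m ≤ 2 * k)
    (hx : m < 2 * x ∧ 2 * x ≤ 4 * k - m ∨ 2 * x ≤ -m ∧ m - 4 * k < 2 * x) :
    ((x :: zigzag 0 0 m).map (Int.cast : ℤ → ZMod (2 * k))).Nodup := by
  refine List.nodup_cons.2 ⟨fun hmem => ?_, nodup_map_cast_zigzag 0 (by omega)⟩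
  obtain ⟨y, hy, hxy⟩ := List.mem_map.1 hmem
  obtain ⟨i, -, hi, rfl⟩ := mem_zigzag.1 hy
  have hi_bound := exists_lt_zigzagShift_eq_iff.1 ⟨i, zero_add m ▸ hi, (zero_add _).symm⟩
  have hdvd := (ZMod.intCast_eq_intCast_iff_dvd_sub _ _ (2 * k)).1 hxy
  have := Int.eq_zero_of_abs_lt_dvd hdvd (abs_lt.2 ⟨by push_cast; omega, by push_cast; omega⟩)
  omega

theorem exists_lt_eq_neg_zigzagShift {i : ℕ} (hi : i ≠ 0) (hik : i + 1 < 2 * k) :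
    ∃ c : ℕ, c ≠ 0 ∧ c < k ∧ ((c : ℤ) = -zigzagShift i ∨ (c : ℤ) = -zigzagShift i + k) := by
  simp only [zigzagShift]
  split_ifs
  · exact ⟨i / 2, by omega, by omega, .inl (by omega)⟩
  · exact ⟨k - (i + 1) / 2, by omega, by omega, .inr (by omega)⟩

theorem zigzag_neg_zigzagShift_eq_append {p n : ℕ} (hp : p + 2 < n) :
    zigzag (-zigzagShift (p + 1)) 0 n =
      zigzag (-zigzagShift (p + 1)) 0 p ++ (-zigzagShift (p + 1) + zigzagShift p) :: 0 ::
        (-zigzagShift (p + 1) + zigzagShift (p + 2)) ::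
          zigzag (-zigzagShift (p + 1)) (p + 3) (n - (p + 3)) := by
  rw [zigzag_eq_append_cons _ _ (by omega : p < n), zero_add,
    show n - (p + 1) = n - (p + 3) + 1 + 1 by omega, zigzag_succ, zigzag_succ, neg_add_cancel]

theorem zigzag_neg_one_eq_cons_cons (n : ℕ) :
    zigzag (-1) 0 (n + 2) = -1 :: 0 :: zigzag (-1) 2 n := by
  rw [zigzag_succ, zigzag_succ]
  rfl

theorem zigzag_zero_eq_cons_cons_append {n p : ℕ} (hn : 4 * p + 5 < n) :
    zigzag 0 0 n = 0 :: 1 :: -1 ::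
      (zigzag 0 3 (4 * p + 2) ++ (2 * p + 3 : ℤ) :: zigzag 0 (4 * p + 6) (n - (4 * p + 6))) := by
  have hshift : zigzagShift (4 * p + 5) = 2 * p + 3 := by
    simp only [zigzagShift]
    split_ifs <;> omega
  rw [zigzag_zero_eq_cons_append (r := 4 * p + 3) hn, zigzag_succ, zigzag_succ, hshift]
  rfl

theorem zigzag_add_two_eq_append_cons_cons {n p : ℕ} (hn : 2 * p + 2 < n) :
    zigzag (p + 2) 0 n = zigzag (p + 2) 0 (2 * p + 1) ++
      (2 * p + 3 : ℤ) :: 1 :: zigzag (p + 2) (2 * p + 3) (n - (2 * p + 3)) := by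
  have hterms : (p + 2 : ℤ) + zigzagShift (2 * p + 1) = 2 * p + 3 ∧
      (p + 2 : ℤ) + zigzagShift (2 * p + 1 + 1) = 1 := by
    simp only [zigzagShift]
    split_ifs <;> omega
  rw [zigzag_eq_append_cons _ _ (by omega : 2 * p + 1 < n), zero_add,
    show n - (2 * p + 1 + 1) = n - (2 * p + 3) + 1 by omega, hterms.1,
    zigzag_succ _ (2 * p + 1 + 1), hterms.2]

theorem nodup_map_cast_zigzag_add_two_append {p : ℕ} (hpk : 4 * p + 5 < 2 * k) :
    ((zigzag (p + 2) 0 (2 * p + 1) ++ (2 * p + 3 : ℤ) ::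
      zigzag 0 (4 * p + 6) (2 * k - (4 * p + 6))).map (Int.cast : ℤ → ZMod (2 * k))).Nodup := by
  have hglued : (2 * p + 3 : ℤ) :: zigzag 0 (4 * p + 6) (2 * k - (4 * p + 6)) =
      zigzag 0 (4 * p + 5) (2 * k - (4 * p + 5)) := by
    rw [show 2 * k - (4 * p + 5) = 2 * k - (4 * p + 6) + 1 by omega, zigzag_succ, zero_add]
    congr 1
    simp only [zigzagShift]
    split_ifs <;> omega
  rw [hglued]
  refine nodup_map_cast_zigzag_append hpk.le fun i hi => ?_
  simp only [zigzagShift]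
  split_ifs <;> omega

theorem zigzag_add_two_eq_append {p n : ℕ} (hn : 2 * p + 6 < n) :
    zigzag (p + 2) 0 n = zigzag (p + 2) 0 (2 * p + 1) ++ (2 * p + 3 : ℤ) :: 1 :: (2 * p + 4 : ℤ) ::
      0 :: (2 * p + 5 : ℤ) :: -1 :: zigzag (p + 2) (2 * p + 7) (n - (2 * p + 7)) := by
  have hterms : (p + 2 : ℤ) + zigzagShift (2 * p + 3) = 2 * p + 4 ∧
      (p + 2 : ℤ) + zigzagShift (2 * p + 3 + 1) = 0 ∧
      (p + 2 : ℤ) + zigzagShift (2 * p + 3 + 1 + 1) = 2 * p + 5 ∧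
      (p + 2 : ℤ) + zigzagShift (2 * p + 3 + 1 + 1 + 1) = -1 := by
    simp only [zigzagShift]
    split_ifs <;> omega
  rw [zigzag_add_two_eq_append_cons_cons (by omega),
    show n - (2 * p + 3) = n - (2 * p + 7) + 1 + 1 + 1 + 1 by omega,
    zigzag_succ _ (2 * p + 3), zigzag_succ _ (2 * p + 3 + 1), zigzag_succ _ (2 * p + 3 + 1 + 1),
    zigzag_succ _ (2 * p + 3 + 1 + 1 + 1), hterms.1, hterms.2.1, hterms.2.2.1, hterms.2.2.2]

theorem nodup_map_cast_tadpole_add_two {p : ℕ} (hpk : 4 * p + 6 < 2 * k) :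
    (((2 * p + 5 : ℤ) :: -1 :: (zigzag 0 3 (4 * p + 2) ++ [(2 * p + 3 : ℤ), 1, 0])).map
      (Int.cast : ℤ → ZMod (2 * k))).Nodup := by
  have hcycle : zigzag 0 0 (4 * p + 6) =
      [0, 1] ++ -1 :: (zigzag 0 3 (4 * p + 2) ++ [(2 * p + 3 : ℤ)]) := by
    rw [zigzag_zero_eq_cons_cons_append (p := p) (by omega), Nat.sub_self]
    rfl
  have hperm : (-1 :: (zigzag 0 3 (4 * p + 2) ++ [(2 * p + 3 : ℤ), 1, 0])).Perm
      (zigzag 0 0 (4 * p + 6)) := by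
    rw [hcycle]
    refine List.Perm.trans ?_ ((List.Perm.swap 0 1 []).append_right _)
    simpa using List.perm_append_comm (l₁ := -1 :: (zigzag 0 3 (4 * p + 2) ++ [(2 * p + 3 : ℤ)]))
      (l₂ := [1, 0])
  exact ((hperm.cons _).map _).nodup_iff.2
    (nodup_map_cast_cons_zigzag hpk.le (by push_cast; omega))

variable [NeZero k]

theorem tadpoleComplementDecomposable_of_sum_eq {s : Finset ℕ} (hs : s ⊆ Finset.range k)
    {x a : ZMod (2 * k)} {l : List (ZMod (2 * k))} {M : Multiset (Sym2 (ZMod (2 * k)))}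
    (hsum : ∑ c ∈ s, pathEdges (waleckiPath k c) = tadpoleEdges x a l + M)
    (hnodup : (x :: a :: l).Nodup) (hM : PathDecomposable M s.card) :
    TadpoleComplementDecomposable (ZMod (2 * k)) (l.length + 1) k := by
  have hrest := hM.add <| PathDecomposable.sum (s := Finset.range k \ s) fun c _ =>
    .of_nodup (nodup_waleckiPath (c : ℤ) k)
  rw [add_comm s.card, Finset.card_sdiff_add_card_eq_card hs, Finset.card_range] at hrest
  refine ⟨x, a, l, _, hnodup, rfl, ?_, hrest⟩
  rw [← sum_pathEdges_waleckiPath, ← Finset.sum_sdiff hs, hsum]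
  abel

theorem tadpoleComplementDecomposable_of_add_eq {c : ℕ} (hc : c ≠ 0) (hck : c < k) {h : ℤ}
    (hch : c = h ∨ c = h + k) {x a : ℤ} {l Q R : List ℤ}
    (hsum : pathEdges (zigzag 0 0 (2 * k)) + pathEdges (zigzag h 0 (2 * k)) =
      tadpoleEdges x a l + (pathEdges Q + pathEdges R))
    (hnodup : ((x :: a :: l).map (Int.cast : ℤ → ZMod (2 * k))).Nodup)
    (hQ : (Q.map (Int.cast : ℤ → ZMod (2 * k))).Nodup)
    (hR : (R.map (Int.cast : ℤ → ZMod (2 * k))).Nodup) :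
    TadpoleComplementDecomposable (ZMod (2 * k)) (l.length + 1) k := by
  have hpath : pathEdges (waleckiPath k c) = pathEdges (waleckiPath k h) := by
    rcases hch with hc | hc <;> rw [hc]
    exact pathEdges_waleckiPath_add h k
  rw [← List.length_map (Int.cast : ℤ → ZMod (2 * k))]
  refine tadpoleComplementDecomposable_of_sum_eq (s := {0, c}) ?_ ?_ hnodup
    (M := pathEdges (Q.map (↑)) + pathEdges (R.map (↑))) ?_
  · intro i hi
    rcases Finset.mem_insert.1 hi with rfl | hi
    · exact Finset.mem_range.2 (by omega)
    · rwa [Finset.mem_singleton.1 hi, Finset.mem_range]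
  · rw [Finset.sum_pair hc.symm, hpath, Nat.cast_zero, waleckiPath, waleckiPath, tadpoleEdges_map,
      pathEdges_map, pathEdges_map, pathEdges_map, pathEdges_map, ← Multiset.map_add,
      ← Multiset.map_add, ← Multiset.map_add, hsum]
  · rw [Finset.card_pair hc.symm]
    exact (PathDecomposable.of_nodup hQ).add (.of_nodup hR)

theorem tadpoleComplementDecomposable_of_mod_four_eq_zero_or_three {m : ℕ} (hm : 3 ≤ m)
    (hmk : m < 2 * k) (hmod : m % 4 = 0 ∨ m % 4 = 3) :
    TadpoleComplementDecomposable (ZMod (2 * k)) m k := by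
  obtain ⟨r, rfl⟩ : ∃ r, m = r + 3 := ⟨m - 3, by omega⟩
  obtain ⟨p, hp⟩ : ∃ p, p = (r + 1) / 2 := ⟨_, rfl⟩
  -- This zigzag passes from the last vertex of the cycle to `0` and on to the pendant vertex.
  let h := -zigzagShift (p + 1)
  have ht : h + zigzagShift p = zigzagShift (r + 2) := by
    simp only [h, zigzagShift]
    split_ifs <;> omega
  obtain ⟨c, hc, hck, hch⟩ := exists_lt_eq_neg_zigzagShift (k := k) p.succ_ne_zero (by omega)
  have hQ : zigzag h 0 (2 * k) = zigzag h 0 p ++ zigzagShift (r + 2) :: 0 ::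
      (h + zigzagShift (p + 2)) :: zigzag h (p + 3) (2 * k - (p + 3)) :=
    ht ▸ zigzag_neg_zigzagShift_eq_append (by omega)
  have hsum := pathEdges_add_eq_tadpoleEdges_of_start (h + zigzagShift (p + 2)) 0
    (zigzagShift (r + 2)) (zigzag 0 1 (r + 1)) (zigzag 0 (r + 3) (2 * k - (r + 3)))
    (zigzag h 0 p) (zigzag h (p + 3) (2 * k - (p + 3)))
  rw [← zigzag_zero_eq_cons_append (by omega), ← hQ] at hsum
  have hcycle : 0 :: (zigzag 0 1 (r + 1) ++ [zigzagShift (r + 2)]) = zigzag 0 0 (r + 3) := by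
    rw [zigzag_zero_eq_cons_append (by omega : r + 2 < r + 3), Nat.sub_self]; rfl
  have hglued : zigzagShift (r + 2) :: zigzag 0 (r + 3) (2 * k - (r + 3)) =
      zigzag 0 (r + 2) (2 * k - (r + 2)) := by
    rw [show 2 * k - (r + 2) = 2 * k - (r + 3) + 1 by omega, zigzag_succ, zero_add]
  have := tadpoleComplementDecomposable_of_add_eq hc hck hch hsum ?_ ?_ ?_
  · simpa using this
  · rw [hcycle]
    refine nodup_map_cast_cons_zigzag hmk.le ?_
    simp only [h, zigzagShift]
    split_ifs <;> omega
  · rw [hglued]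
    refine nodup_map_cast_zigzag_append (by omega) fun i hi => ?_
    simp only [h, zigzagShift]
    split_ifs <;> omega
  · rw [← zigzag_succ]
    exact nodup_map_cast_zigzag h (by omega)

theorem tadpoleComplementDecomposable_of_mod_four_eq_one {p : ℕ} (hpk : 4 * p + 5 < 2 * k) :
    TadpoleComplementDecomposable (ZMod (2 * k)) (4 * p + 5) k := by
  have hsum := pathEdges_add_eq_tadpoleEdges_of_second 0 1 (2 * p + 3 : ℤ)
    (-1 :: zigzag 0 3 (4 * p + 2)) (zigzag 0 (4 * p + 6) (2 * k - (4 * p + 6)))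
    (zigzag (p + 2) 0 (2 * p + 1)) (zigzag (p + 2) (2 * p + 3) (2 * k - (2 * p + 3)))
  rw [← zigzag_add_two_eq_append_cons_cons (by omega), List.cons_append,
    ← zigzag_zero_eq_cons_cons_append hpk] at hsum
  have hcycle : 0 :: 1 :: -1 :: (zigzag 0 3 (4 * p + 2) ++ [(2 * p + 3 : ℤ)]) =
      zigzag 0 0 (4 * p + 6) := by
    rw [zigzag_zero_eq_cons_cons_append (p := p) (by omega), Nat.sub_self]
    rfl
  have := tadpoleComplementDecomposable_of_add_eq (c := p + 2) (by omega) (by omega)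
    (.inl (by push_cast; rfl)) hsum ?_ (nodup_map_cast_zigzag_add_two_append hpk) ?_
  · simpa using this
  · rw [List.cons_append, hcycle]
    exact nodup_map_cast_zigzag 0 (by omega)
  · have hQ := nodup_map_cast_zigzag (p + 2) (k := k) (zero_add _).le
    rw [zigzag_add_two_eq_append_cons_cons (by omega), List.map_append] at hQ
    exact hQ.of_append_right.of_cons

theorem tadpoleComplementDecomposable_of_mod_four_eq_two {p : ℕ} (hpk : 4 * p + 6 < 2 * k) :
    TadpoleComplementDecomposable (ZMod (2 * k)) (4 * p + 6) k := by
  let φ : ℤ → ZMod (2 * k) := Int.cast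
  let R : List ℤ := zigzag (p + 2) (2 * p + 7) (2 * k - (2 * p + 7))
  let D : List ℤ := zigzag (-1) 2 (2 * k - 2)
  have hQ := zigzag_add_two_eq_append (p := p) (n := 2 * k) (by omega)
  have hW : zigzag (-1) 0 (2 * k) = -1 :: 0 :: D := by
    rw [← zigzag_neg_one_eq_cons_cons, Nat.sub_add_cancel (by omega)]
  have hsum := pathEdges_add_add_eq_tadpoleEdges (2 * p + 5 : ℤ) (2 * p + 4) 0 1 (-1) (2 * p + 3)
    (zigzag 0 3 (4 * p + 2)) (zigzag 0 (4 * p + 6) (2 * k - (4 * p + 6)))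
    (zigzag (p + 2) 0 (2 * p + 1)) D R
  rw [← zigzag_zero_eq_cons_cons_append (by omega), ← hW, ← hQ] at hsum
  have hQ_rest : (((2 * p + 5 : ℤ) :: 0 :: (2 * p + 4 : ℤ) :: 1 :: -1 :: R).map φ).Nodup := by
    have hQ_nodup := nodup_map_cast_zigzag (p + 2) (k := k) (zero_add _).le
    rw [hQ, List.map_append] at hQ_nodup
    have hperm := (List.reverse_perm [(1 : ℤ), 2 * p + 4, 0, 2 * p + 5]).append_right (-1 :: R)
    exact (hperm.map φ).nodup_iff.2 hQ_nodup.of_append_right.of_cons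
  have hW_rest : ((0 :: D).map φ).Nodup := by
    have hW_nodup := nodup_map_cast_zigzag (-1) (k := k) (zero_add _).le
    rw [hW] at hW_nodup
    exact hW_nodup.of_cons
  have hM := ((PathDecomposable.of_nodup (nodup_map_cast_zigzag_add_two_append (p := p)
    (by omega))).add (.of_nodup hQ_rest)).add (.of_nodup hW_rest)
  have hcard : ({0, p + 2, k - 1} : Finset ℕ).card = 1 + 1 + 1 :=
    Finset.card_eq_three.2 ⟨0, p + 2, k - 1, by omega, by omega, by omega, rfl⟩
  have := tadpoleComplementDecomposable_of_sum_eq (s := {0, p + 2, k - 1}) ?_ ?_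
    (nodup_map_cast_tadpole_add_two hpk) (hcard ▸ hM)
  · simpa using this
  · intro i hi
    simp only [Finset.mem_insert, Finset.mem_singleton] at hi
    rw [Finset.mem_range]
    omega
  · have hmap := congrArg (Multiset.map (Sym2.map φ)) hsum
    simp only [Multiset.map_add, ← pathEdges_map, ← tadpoleEdges_map] at hmap
    rw [Finset.sum_insert (by simp; omega), Finset.sum_pair (by omega), pathEdges_waleckiPath_pred,
      ← add_assoc, Nat.cast_zero, Nat.cast_add, Nat.cast_ofNat]
    exact hmap

end EvenOrder

theorem tadpoleComplementDecomposable_zmod {k m : ℕ} [NeZero k] (hm : 3 ≤ m) (hmk : m < 2 * k) :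
    TadpoleComplementDecomposable (ZMod (2 * k)) m k := by
  by_cases hmod : m % 4 = 0 ∨ m % 4 = 3
  · exact tadpoleComplementDecomposable_of_mod_four_eq_zero_or_three hm hmk hmod
  · obtain ⟨p, rfl | rfl⟩ : ∃ p, m = 4 * p + 5 ∨ m = 4 * p + 6 := ⟨(m - 5) / 4, by omega⟩
    · exact tadpoleComplementDecomposable_of_mod_four_eq_one hmk
    · exact tadpoleComplementDecomposable_of_mod_four_eq_two hmk

/-- Gallai's conjecture holds for `K_n` minus a tadpole `T_{m,1}`
(a cycle on `m` vertices plus a pendant edge), for `3 ≤ m ≤ n - 1`. -/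
theorem gallai_complete_minus_tadpole (n m : ℕ) (hn : 4 ≤ n) (hm : 3 ≤ m)
    (hmn : m ≤ n - 1) (f : ZMod m → Fin n) (hf : Function.Injective f)
    (w : Fin n) (hw : w ∉ Set.range f) :
    ∃ P : List (Σ x y : Fin n,
        ((⊤ : SimpleGraph (Fin n)).deleteEdges
          {e | (∃ i, e = s(f i, f (i + 1))) ∨ e = s(f 0, w)}).Walk x y),
      IsPathDecomp ((⊤ : SimpleGraph (Fin n)).deleteEdges
          {e | (∃ i, e = s(f i, f (i + 1))) ∨ e = s(f 0, w)}) P ∧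
      P.length ≤ (n + 1) / 2 := by
  have : NeZero m := ⟨by omega⟩
  obtain ⟨k, rfl | rfl⟩ := n.even_or_odd'
  · have : NeZero k := ⟨by omega⟩
    rw [show (2 * k + 1) / 2 = k by omega]
    exact (tadpoleComplementDecomposable_zmod hm (by omega)).exists_isPathDecomp
      (ZMod.card (2 * k)) hf hw
  · have : NeZero k := ⟨by omega⟩
    rw [show (2 * k + 1 + 1) / 2 = k + 1 by omega]
    exact (tadpoleComplementDecomposable_option_zmod hm (by omega)).exists_isPathDecomp
      (by rw [Fintype.card_option, ZMod.card]) hf hw
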